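/- Let ω = max_{1≤j≤m} |{ i : A_{j,i} ≠ 0 }| be the maximum number of nonzero entries in a row of A, and for 0 ≤ l ≤ min(ω,τ) set p_l = C(ω,l)·C(n−ω,τ−l)/C(n,τ) and c_l = max(l/ω, (τ−l)/(n−ω)) (with c_l = l/ω when ω = n), and set β = Σ_{k=1}^{min(ω,τ)} min(1, (m·n/τ)·Σ_{l=k}^{min(ω,τ)} c_l p_l). Then F admits a (β, L)-Expected Separable Overapproximation with respect to the τ-nice sampling Ŝ: for all x, h ∈ ℝ^n, E[F(x + h_{[Ŝ]})] ≤ F(x) + (τ/n)·(⟨∇F(x), h⟩ + (β/2)·‖h‖_L²). -/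

import Mathlib

open Finset
open scoped BigOperators Classical

noncomputable section

/-- Exponential loss `f(x) = (1/m) Σ_j exp(x_j)` (the normaliser `m` is fixed,
the index type may vary). -/
def fExp (m : ℕ) {ι : Type} [Fintype ι] (x : ι → ℝ) : ℝ :=
  (1 / (m : ℝ)) * ∑ j, Real.exp (x j)

/-- Gradient of the exponential loss. -/
def gradf (m : ℕ) {ι : Type} [Fintype ι] (x : ι → ℝ) : ι → ℝ :=
  fun j => fderiv ℝ (fExp m (ι := ι)) x (Pi.single j 1)

/-- `F(λ) = log f(Aλ)`. -/
def FObj {mr : Type} [Fintype mr] {n : ℕ} (m : ℕ) (A : Matrix mr (Fin n) ℝ)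
    (lam : Fin n → ℝ) : ℝ :=
  Real.log (fExp m (A.mulVec lam))

/-- Gradient of `F`: `(∇F(λ))_i` is the `i`-th partial derivative. -/
def gradF {mr : Type} [Fintype mr] {n : ℕ} (m : ℕ) (A : Matrix mr (Fin n) ℝ)
    (lam : Fin n → ℝ) : Fin n → ℝ :=
  fun i => fderiv ℝ (FObj m A) lam (Pi.single i 1)

/-- Coordinate-wise Lipschitz constants `L_i = max_j A_{j,i}²`. -/
def Lip {mr : Type} [Fintype mr] {n : ℕ} (A : Matrix mr (Fin n) ℝ) (i : Fin n) : ℝ :=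
  ⨆ j, (A j i) ^ 2

/-- `h_{[S]}`: keep the coordinates of `h` in `S`, zero the others. -/
def restr {n : ℕ} (h : Fin n → ℝ) (S : Finset (Fin n)) : Fin n → ℝ :=
  fun i => if i ∈ S then h i else 0

/-- Expectation over the `τ`-nice sampling (uniform over subsets of cardinality `τ`). -/
def niceExp (n τ : ℕ) (g : Finset (Fin n) → ℝ) : ℝ :=
  (∑ S ∈ Finset.powersetCard τ (Finset.univ : Finset (Fin n)), g S) /
    ((Finset.powersetCard τ (Finset.univ : Finset (Fin n))).card : ℝ)

/-- Expected Separable Overapproximation with constant `β` and weights `L`. -/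
def ESO {mr : Type} [Fintype mr] {n : ℕ} (m : ℕ) (A : Matrix mr (Fin n) ℝ)
    (τ : ℕ) (β : ℝ) : Prop :=
  ∀ x h : Fin n → ℝ,
    niceExp n τ (fun S => FObj m A (x + restr h S)) ≤
      FObj m A x + ((τ : ℝ) / (n : ℝ)) *
        ((∑ i, gradF m A x i * h i) + (β / 2) * ∑ i, Lip A i * h i ^ 2)

/-- ℓ¹ distance from `x` to a set `K`. -/
def D1 {ι : Type} [Fintype ι] (K : Set (ι → ℝ)) (x : ι → ℝ) : ℝ :=
  ⨅ z : K, ∑ j, |x j - (z : ι → ℝ) j|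

/-- Kernel of `Aᵀ`. -/
def kerAT {mr : Type} [Fintype mr] {n : ℕ} (A : Matrix mr (Fin n) ℝ) : Set (mr → ℝ) :=
  {φ | A.transpose.mulVec φ = 0}

/-- `‖g‖_{L⁻¹} = (Σ_i g_i²/L_i)^{1/2}`. -/
def normLinv {mr : Type} [Fintype mr] {n : ℕ} (A : Matrix mr (Fin n) ℝ)
    (g : Fin n → ℝ) : ℝ :=
  Real.sqrt (∑ i, g i ^ 2 / Lip A i)

/-- `γ̃(A,K)`. -/
def gammaT {mr : Type} [Fintype mr] {n : ℕ} (A : Matrix mr (Fin n) ℝ)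
    (K : Set (mr → ℝ)) : ℝ :=
  ⨅ φ : {φ : mr → ℝ // φ ∈ K ∧ φ ∉ kerAT A},
    normLinv A (A.transpose.mulVec (φ : mr → ℝ)) / D1 (K ∩ kerAT A) (φ : mr → ℝ)

/-- Hard core `H(A)`. -/
def hardCore {mr : Type} [Fintype mr] {n : ℕ} (A : Matrix mr (Fin n) ℝ) : Set mr :=
  {j | ∃ φ : mr → ℝ, φ ∈ kerAT A ∧ (∀ k, 0 ≤ φ k) ∧ 0 < φ j}

/-- Parallel Adaboost iterates, given the sequence of sampled coordinate sets. -/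
def iter {mr : Type} [Fintype mr] {n : ℕ} (m : ℕ) (A : Matrix mr (Fin n) ℝ) (β : ℝ)
    (lam0 : Fin n → ℝ) (s : ℕ → Finset (Fin n)) : ℕ → Fin n → ℝ
  | 0 => lam0
  | t + 1 =>
    let lt := iter m A β lam0 s t
    let lt' : Fin n → ℝ := fun i =>
      if i ∈ s t then lt i - (1 / (β * Lip A i)) * gradF m A lt i else lt i
    if FObj m A lt' ≤ FObj m A lt then lt' else lt

/-!
The increment of `F` along `u` is the logarithm of an average of `exp ((A u)_j)` under the softmax
distribution of `A x`, so Hoeffding's lemma gives `F (x + u) ≤ F x + ⟨∇F x, u⟩ + ‖A u‖_∞² / 2`.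
For `u = h_[S]`, the Cauchy–Schwarz inequality bounds `‖A u‖_∞²` by `N S * ∑ i ∈ S, L i * h i ^ 2`,
where `N S` is the largest overlap of `S` with the support of a row. It remains to average over the
sampling. Writing `N S = ∑ k ≥ 1, 1_{k ≤ N S}` reduces this to the probability that `i ∈ S` and
`k ≤ N S`. That is at most `P(i ∈ S) = τ / n`, and, by a union bound over the `m` rows, at most
`m * ∑ l ≥ k, c_l * p_l`; the minimum of the two, divided by `τ / n`, is the `k`-th term of `β`.
-/

section Softmax

variable {ι : Type*} [Fintype ι]

/-- The softmax distribution of `y`, i.e. the gradient of log-sum-exp at `y`. -/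
def softmax (y : ι → ℝ) (j : ι) : ℝ := Real.exp (y j) / ∑ k, Real.exp (y k)

lemma softmax_nonneg (y : ι → ℝ) (j : ι) : 0 ≤ softmax y j := by
  unfold softmax
  positivity

lemma sum_exp_pos [Nonempty ι] (y : ι → ℝ) : 0 < ∑ j, Real.exp (y j) :=
  sum_pos (fun _ _ ↦ Real.exp_pos _) univ_nonempty

lemma sum_softmax [Nonempty ι] (y : ι → ℝ) : ∑ j, softmax y j = 1 := by
  simp only [softmax, ← sum_div, div_self (sum_exp_pos y).ne']

/-- A form of Hoeffding's lemma. -/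
lemma sum_mul_exp_le_exp {w d : ι → ℝ} (hw : ∀ j, 0 ≤ w j) (hw1 : ∑ j, w j = 1) {M : ℝ}
    (hd : ∀ j, |d j| ≤ M) :
    ∑ j, w j * Real.exp (d j) ≤ Real.exp (∑ j, w j * d j + M ^ 2 / 2) := by
  let _ : MeasurableSpace ι := ⊤
  have hsum : ∑ j, ENNReal.ofReal (w j) = 1 := by
    rw [← ENNReal.ofReal_sum_of_nonneg fun j _ ↦ hw j, hw1, ENNReal.ofReal_one]
  let P : PMF ι := PMF.ofFintype (fun j ↦ ENNReal.ofReal (w j)) hsum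
  have integral_eq (g : ι → ℝ) : ∫ j, g j ∂P.toMeasure = ∑ j, w j * g j := by
    simp [PMF.integral_eq_sum, P, ENNReal.toReal_ofReal (hw _)]
  have hmgf := (ProbabilityTheory.hasSubgaussianMGF_of_mem_Icc (μ := P.toMeasure)
    (measurable_of_finite d).aemeasurable (.of_forall fun j ↦ abs_le.1 (hd j))).mgf_le 1
  have hvar : (((‖M - -M‖₊ / 2) ^ 2 : NNReal) : ℝ) = M ^ 2 := by
    simp [← two_mul]
  have hcentred : ∑ j, w j * Real.exp (d j - ∑ i, w i * d i) =
      (∑ j, w j * Real.exp (d j)) / Real.exp (∑ i, w i * d i) := by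
    simp only [Real.exp_sub, sum_div, mul_div_assoc]
  simp only [ProbabilityTheory.mgf, integral_eq, one_mul, hvar, one_pow, mul_one, hcentred] at hmgf
  rwa [div_le_iff₀' (Real.exp_pos _), ← Real.exp_add] at hmgf

end Softmax

section Objective

variable {ι : Type} [Fintype ι] {m n : ℕ}

lemma fExp_add (m : ℕ) (y d : ι → ℝ) :
    fExp m (y + d) = fExp m y * ∑ j, softmax y j * Real.exp (d j) := by
  have hexp (j : ι) : Real.exp (y j) = (∑ k, Real.exp (y k)) * softmax y j := by
    have : Nonempty ι := ⟨j⟩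
    rw [softmax, mul_div_cancel₀ _ (sum_exp_pos y).ne']
  rw [fExp, fExp, mul_assoc, mul_sum _ _ (∑ k, Real.exp (y k))]
  simp only [Pi.add_apply, Real.exp_add, ← mul_assoc, ← hexp]

lemma fExp_pos [Nonempty ι] (hm : 1 ≤ m) (y : ι → ℝ) : 0 < fExp m y := by
  have := sum_exp_pos y
  unfold fExp
  positivity

lemma log_fExp_add_le [Nonempty ι] (hm : 1 ≤ m) (y : ι → ℝ) {d : ι → ℝ} {M : ℝ}
    (hd : ∀ j, |d j| ≤ M) :
    Real.log (fExp m (y + d)) ≤ Real.log (fExp m y) + (∑ j, softmax y j * d j + M ^ 2 / 2) := by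
  rw [Real.log_le_iff_le_exp (fExp_pos hm _), Real.exp_add, Real.exp_log (fExp_pos hm y), fExp_add]
  exact mul_le_mul_of_nonneg_left
    (sum_mul_exp_le_exp (softmax_nonneg y) (sum_softmax y) hd) (fExp_pos hm y).le

lemma fderiv_FObj_apply [Nonempty ι] (hm : 1 ≤ m) (A : Matrix ι (Fin n) ℝ) (x u : Fin n → ℝ) :
    fderiv ℝ (FObj m A) x u = ∑ j, softmax (A.mulVec x) j * A.mulVec u j := by
  have hrow (j : ι) : HasFDerivAt (fun y : Fin n → ℝ ↦ A.mulVec y j)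
      (LinearMap.proj j ∘ₗ A.mulVecLin).toContinuousLinearMap x :=
    (LinearMap.proj j ∘ₗ A.mulVecLin).toContinuousLinearMap.hasFDerivAt
  have hF : HasFDerivAt (FObj m A) _ x :=
    ((HasFDerivAt.fun_sum fun j (_ : j ∈ univ) ↦ (hrow j).exp).const_mul (1 / (m : ℝ))).log
      (fExp_pos hm (A.mulVec x)).ne'
  rw [hF.fderiv]
  simp only [softmax, div_mul_eq_mul_div, ← sum_div, smul_apply,
    _root_.sum_apply, LinearMap.coe_toContinuousLinearMap', LinearMap.comp_apply,
    LinearMap.proj_apply, Matrix.mulVecLin_apply, smul_eq_mul]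
  field_simp

lemma sum_gradF_mul (m : ℕ) (A : Matrix ι (Fin n) ℝ) (x h : Fin n → ℝ) :
    ∑ i, gradF m A x i * h i = fderiv ℝ (FObj m A) x h := by
  conv_rhs => rw [pi_eq_sum_univ' h, map_sum]
  refine sum_congr rfl fun i _ ↦ ?_
  rw [map_smul, smul_eq_mul, mul_comm, gradF]

lemma FObj_add_le [Nonempty ι] (hm : 1 ≤ m) (A : Matrix ι (Fin n) ℝ) (x : Fin n → ℝ)
    {u : Fin n → ℝ} {M : ℝ} (hu : ∀ j, |A.mulVec u j| ≤ M) :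
    FObj m A (x + u) ≤ FObj m A x + (∑ i, gradF m A x i * u i + M ^ 2 / 2) := by
  rw [sum_gradF_mul, fderiv_FObj_apply hm, FObj, Matrix.mulVec_add]
  exact log_fExp_add_le hm _ hu

end Objective

section SetFamily

variable {α ι : Type*} [DecidableEq α] [Fintype ι]

lemma card_filter_mem_powersetCard {J : Finset α} {i : α} (hi : i ∈ J) (l : ℕ) :
    (#{S ∈ powersetCard l J | i ∈ S} : ℝ) = l / #J * (#J).choose l := by
  obtain ⟨q, hq⟩ : ∃ q, #J = q + 1 := Nat.exists_eq_add_one.2 (card_pos.2 ⟨i, hi⟩)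
  obtain _ | l := l
  · simp
  have hcount : #{S ∈ powersetCard (l + 1) J | i ∈ S} = q.choose l := by
    simpa [hq] using card_filter_powersetCard_subset {i} J (l + 1) (by simpa) (by simp)
  have hchoose : ((q + 1) * q.choose l : ℝ) = (q + 1).choose (l + 1) * (l + 1) :=
    mod_cast Nat.add_one_mul_choose_eq q l
  rw [hcount, hq]
  push_cast
  field_simp
  linarith

lemma card_le_mul_of_inter_mem_of_sdiff_mem {J : Finset α} {𝒮 𝒜 ℬ : Finset (Finset α)}
    (h𝒜 : ∀ S ∈ 𝒮, S ∩ J ∈ 𝒜) (hℬ : ∀ S ∈ 𝒮, S \ J ∈ ℬ) : #𝒮 ≤ #𝒜 * #ℬ := by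
  rw [← card_product]
  refine card_le_card_of_injOn (fun S ↦ (S ∩ J, S \ J))
    (fun S hS ↦ mem_product.2 ⟨h𝒜 S hS, hℬ S hS⟩) fun S _ T _ hST ↦ ?_
  obtain ⟨hinter, hsdiff⟩ := Prod.mk.inj hST
  rw [← sdiff_union_inter S J, hinter, hsdiff, sdiff_union_inter]

/-- The largest number of points that `S` shares with a member of the family `R`. -/
def maxOverlap (R : ι → Finset α) (S : Finset α) : ℕ :=
  univ.sup fun j ↦ #(S ∩ R j)

lemma card_inter_le_maxOverlap (R : ι → Finset α) (S : Finset α) (j : ι) :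
    #(S ∩ R j) ≤ maxOverlap R S :=
  le_sup (f := fun j ↦ #(S ∩ R j)) (mem_univ j)

end SetFamily

section NiceSampling

variable {α ι : Type*} [Fintype α] [Fintype ι]

/-- The probability that the `τ`-nice sampling of `α` satisfies `P`. -/
def niceProb (τ : ℕ) (P : Finset α → Prop) [DecidablePred P] : ℝ :=
  #{S ∈ powersetCard τ univ | P S} / (Fintype.card α).choose τ

lemma niceProb_mono {τ : ℕ} {P Q : Finset α → Prop} [DecidablePred P] [DecidablePred Q]
    (h : ∀ S, P S → Q S) : niceProb τ P ≤ niceProb τ Q := by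
  unfold niceProb
  gcongr with S
  exact h S

lemma expect_powersetCard_ite (τ : ℕ) (P : Finset α → Prop) [DecidablePred P] (a : ℝ) :
    𝔼 S ∈ powersetCard τ univ, (if P S then a else 0) = niceProb τ P * a := by
  rw [expect_eq_sum_div_card, card_powersetCard, card_univ, ← sum_filter, sum_const, nsmul_eq_mul,
    niceProb, div_mul_eq_mul_div]

lemma niceProb_le_sum {κ : Type*} {τ : ℕ} {P : Finset α → Prop} {Q : κ → Finset α → Prop}
    [DecidablePred P] [∀ j, DecidablePred (Q j)] (s : Finset κ)
    (h : ∀ S, #S = τ → P S → ∃ j ∈ s, Q j S) :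
    niceProb τ P ≤ ∑ j ∈ s, niceProb τ (Q j) := by
  simp only [niceProb, ← sum_div]
  gcongr
  have hsub : ({S ∈ powersetCard τ univ | P S} : Finset (Finset α)) ⊆
      s.biUnion fun j ↦ {S ∈ powersetCard τ univ | Q j S} := by
    intro S hS
    simp only [mem_filter, mem_biUnion, mem_powersetCard_univ] at hS ⊢
    obtain ⟨j, hj, hQ⟩ := h S hS.1 hS.2
    exact ⟨j, hj, hS.1, hQ⟩
  exact mod_cast (card_le_card hsub).trans card_biUnion_le

lemma niceProb_mem [DecidableEq α] {τ : ℕ} (hτ : τ ≤ Fintype.card α) (i : α) :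
    niceProb τ (i ∈ ·) = τ / Fintype.card α := by
  have : ((Fintype.card α).choose τ : ℝ) ≠ 0 := mod_cast (Nat.choose_pos hτ).ne'
  rw [niceProb, card_filter_mem_powersetCard (mem_univ i), card_univ, mul_div_cancel_right₀ _ this]

lemma expect_powersetCard_sum {τ : ℕ} (hτ : τ ≤ Fintype.card α) (a : α → ℝ) :
    𝔼 S ∈ powersetCard τ univ, ∑ i ∈ S, a i = τ / Fintype.card α * ∑ i, a i := by
  calc 𝔼 S ∈ powersetCard τ univ, ∑ i ∈ S, a i
      = ∑ i, 𝔼 S ∈ powersetCard τ univ, (if i ∈ S then a i else 0) := by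
        rw [← expect_sum_comm]
        simp only [sum_ite_mem, univ_inter]
    _ = τ / Fintype.card α * ∑ i, a i := by
        simp only [expect_powersetCard_ite, niceProb_mem hτ, mul_sum]

variable [DecidableEq α]

/-- The hypergeometric weight `p_l`: the probability that the `τ`-nice sampling of `n` points meets
a fixed set of `ω` points in exactly `l` points. -/
def overlapProb (n ω τ l : ℕ) : ℝ :=
  (ω.choose l * (n - ω).choose (τ - l)) / n.choose τ

/-- The coefficient `c_l`: given that the `τ`-nice sampling of `n` points meets a fixed set of `ω`
points in exactly `l` points, it contains any given point with probability at most `c_l`. The two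
terms correspond to points inside and outside the fixed set; the second one is `0` by convention
when `ω = n`. -/
def memRatio (n ω τ l : ℕ) : ℝ :=
  max (l / ω : ℝ) ((τ - l) / (n - ω))

lemma card_filter_mem_and_card_inter_le_of_mem {J : Finset α} {i : α} (hi : i ∈ J) (τ l : ℕ) :
    (#{S ∈ powersetCard τ univ | i ∈ S ∧ #(S ∩ J) = l} : ℝ) ≤
      l / #J * ((#J).choose l * (Fintype.card α - #J).choose (τ - l)) := by
  calc (#{S ∈ powersetCard τ univ | i ∈ S ∧ #(S ∩ J) = l} : ℝ)
      ≤ #{T ∈ powersetCard l J | i ∈ T} * #(powersetCard (τ - l) Jᶜ) := mod_cast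
        card_le_mul_of_inter_mem_of_sdiff_mem (J := J) (by grind [mem_compl]) (by grind [mem_compl])
    _ = l / #J * ((#J).choose l * (Fintype.card α - #J).choose (τ - l)) := by
      rw [card_filter_mem_powersetCard hi, card_powersetCard, card_compl, mul_assoc]

lemma card_filter_mem_and_card_inter_le_of_notMem {J : Finset α} {i : α} (hi : i ∉ J) {τ l : ℕ}
    (hl : l ≤ τ) :
    (#{S ∈ powersetCard τ univ | i ∈ S ∧ #(S ∩ J) = l} : ℝ) ≤
      (τ - l) / (Fintype.card α - #J) *
        ((#J).choose l * (Fintype.card α - #J).choose (τ - l)) := by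
  calc (#{S ∈ powersetCard τ univ | i ∈ S ∧ #(S ∩ J) = l} : ℝ)
      ≤ #(powersetCard l J) * #{T ∈ powersetCard (τ - l) Jᶜ | i ∈ T} := mod_cast
        card_le_mul_of_inter_mem_of_sdiff_mem (J := J) (by grind [mem_compl]) (by grind [mem_compl])
    _ = (τ - l) / (Fintype.card α - #J) *
          ((#J).choose l * (Fintype.card α - #J).choose (τ - l)) := by
      rw [card_filter_mem_powersetCard (mem_compl.2 hi), card_powersetCard, card_compl,
        Nat.cast_sub hl, Nat.cast_sub (card_le_univ J), mul_left_comm]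

lemma niceProb_mem_and_card_inter_eq_le (J : Finset α) (i : α) {τ l : ℕ} (hl : l ≤ τ) :
    niceProb τ (fun S ↦ i ∈ S ∧ #(S ∩ J) = l) ≤
      memRatio (Fintype.card α) #J τ l * overlapProb (Fintype.card α) #J τ l := by
  rw [niceProb, overlapProb, mul_div_assoc']
  gcongr
  by_cases hi : i ∈ J
  · refine (card_filter_mem_and_card_inter_le_of_mem hi τ l).trans ?_
    gcongr
    exact le_max_left _ _
  · refine (card_filter_mem_and_card_inter_le_of_notMem hi hl).trans ?_
    gcongr
    exact le_max_right _ _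

lemma niceProb_mem_and_le_card_inter_le {J : Finset α} {ω : ℕ} (hJ : #J ≤ ω)
    (hω : ω ≤ Fintype.card α) (i : α) (τ k : ℕ) :
    niceProb τ (fun S ↦ i ∈ S ∧ k ≤ #(S ∩ J)) ≤
      ∑ l ∈ Icc k (min ω τ),
        memRatio (Fintype.card α) ω τ l * overlapProb (Fintype.card α) ω τ l := by
  -- Enlarging `J` to exactly `ω` points makes the law of the overlap hypergeometric.
  obtain ⟨J', hJJ', rfl⟩ := exists_superset_card_eq hJ hω
  have hlevels : niceProb τ (fun S ↦ i ∈ S ∧ k ≤ #(S ∩ J)) ≤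
      ∑ l ∈ Icc k (min #J' τ), niceProb τ (fun S ↦ i ∈ S ∧ #(S ∩ J') = l) := by
    refine niceProb_le_sum _ fun S hS ⟨hi, hk⟩ ↦ ⟨#(S ∩ J'), mem_Icc.2 ⟨?_, ?_⟩, hi, rfl⟩
    · exact hk.trans (card_le_card (inter_subset_inter_left hJJ'))
    · exact le_min (card_le_card inter_subset_right) (hS ▸ card_le_card inter_subset_left)
  refine hlevels.trans (sum_le_sum fun l hl ↦ niceProb_mem_and_card_inter_eq_le J' i ?_)
  exact (mem_Icc.1 hl).2.trans (min_le_right _ _)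

lemma niceProb_mem_and_le_maxOverlap_le {R : ι → Finset α} {ω : ℕ} (hR : ∀ j, #(R j) ≤ ω)
    (hω : ω ≤ Fintype.card α) (i : α) (τ : ℕ) {k : ℕ} (hk : 0 < k) :
    niceProb τ (fun S ↦ i ∈ S ∧ k ≤ maxOverlap R S) ≤
      Fintype.card ι * ∑ l ∈ Icc k (min ω τ),
        memRatio (Fintype.card α) ω τ l * overlapProb (Fintype.card α) ω τ l := by
  have hunion : niceProb τ (fun S ↦ i ∈ S ∧ k ≤ maxOverlap R S) ≤
      ∑ j, niceProb τ (fun S ↦ i ∈ S ∧ k ≤ #(S ∩ R j)) := by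
    refine niceProb_le_sum _ fun S _ ⟨hi, hS⟩ ↦ ?_
    obtain ⟨j, hj, hkj⟩ := (Finset.le_sup_iff hk).1 hS
    exact ⟨j, hj, hi, hkj⟩
  rw [← nsmul_eq_mul, ← card_univ, ← sum_const]
  exact hunion.trans
    (sum_le_sum fun j _ ↦ niceProb_mem_and_le_card_inter_le (hR j) hω i τ k)

lemma natCast_eq_sum_Icc_ite {N K : ℕ} (h : N ≤ K) :
    (N : ℝ) = ∑ k ∈ Icc 1 K, if k ≤ N then 1 else 0 := by
  have : {k ∈ Icc 1 K | k ≤ N} = Icc 1 N := by grind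
  simp [this]

lemma expect_powersetCard_mul_sum {τ K : ℕ} {N : Finset α → ℕ} (hN : ∀ S, #S = τ → N S ≤ K)
    (a : α → ℝ) :
    𝔼 S ∈ powersetCard τ univ, N S * ∑ i ∈ S, a i =
      ∑ k ∈ Icc 1 K, ∑ i, niceProb τ (fun S ↦ i ∈ S ∧ k ≤ N S) * a i := by
  have hlayers : ∀ S ∈ powersetCard τ univ, N S * ∑ i ∈ S, a i =
      ∑ k ∈ Icc 1 K, ∑ i, if i ∈ S ∧ k ≤ N S then a i else 0 := by
    intro S hS
    rw [natCast_eq_sum_Icc_ite (hN S (mem_powersetCard_univ.1 hS)), sum_mul]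
    refine sum_congr rfl fun k _ ↦ ?_
    by_cases hk : k ≤ N S <;> simp [hk]
  simp only [expect_congr rfl hlayers, expect_sum_comm, expect_powersetCard_ite]

/-- The constant `β` of the overapproximation, for `M` sets of at most `ω` points each in an
`n`-point set. -/
def esoConst (M n ω τ : ℕ) : ℝ :=
  ∑ k ∈ Icc 1 (min ω τ),
    min 1 ((M * n / τ : ℝ) * ∑ l ∈ Icc k (min ω τ), memRatio n ω τ l * overlapProb n ω τ l)

lemma niceProb_mem_and_le_maxOverlap_le_mul_min {R : ι → Finset α} {ω τ : ℕ}
    (hR : ∀ j, #(R j) ≤ ω) (hω : ω ≤ Fintype.card α) (hτ : τ ≤ Fintype.card α) (hτ0 : 0 < τ)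
    (i : α) {k : ℕ} (hk : 0 < k) :
    niceProb τ (fun S ↦ i ∈ S ∧ k ≤ maxOverlap R S) ≤ τ / Fintype.card α *
      min 1 ((Fintype.card ι * Fintype.card α / τ : ℝ) * ∑ l ∈ Icc k (min ω τ),
        memRatio (Fintype.card α) ω τ l * overlapProb (Fintype.card α) ω τ l) := by
  have : Nonempty α := ⟨i⟩
  rw [mul_min_of_nonneg _ _ (by positivity), mul_one, ← mul_assoc]
  refine le_min ((niceProb_mono fun S hS ↦ hS.1).trans_eq (niceProb_mem hτ i)) ?_
  have hcancel : (τ / Fintype.card α * (Fintype.card ι * Fintype.card α / τ) : ℝ) =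
      Fintype.card ι := by
    field_simp
  rw [hcancel]
  exact niceProb_mem_and_le_maxOverlap_le hR hω i τ hk

theorem expect_powersetCard_maxOverlap_mul_sum_le {R : ι → Finset α} {ω τ : ℕ}
    (hR : ∀ j, #(R j) ≤ ω) (hω : ω ≤ Fintype.card α) (hτ : τ ≤ Fintype.card α)
    {a : α → ℝ} (ha : ∀ i, 0 ≤ a i) :
    𝔼 S ∈ powersetCard τ univ, maxOverlap R S * ∑ i ∈ S, a i ≤
      τ / Fintype.card α * (esoConst (Fintype.card ι) (Fintype.card α) ω τ * ∑ i, a i) := by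
  have hmax (S : Finset α) (hS : #S = τ) : maxOverlap R S ≤ min ω τ :=
    Finset.sup_le fun j _ ↦ le_min ((card_le_card inter_subset_right).trans (hR j))
      (hS ▸ card_le_card inter_subset_left)
  rw [expect_powersetCard_mul_sum hmax, esoConst, sum_mul, mul_sum]
  refine sum_le_sum fun k hk ↦ ?_
  obtain ⟨hk1, hkτ⟩ := mem_Icc.1 hk
  have hτ0 : 0 < τ := by omega
  rw [← mul_assoc, mul_sum]
  exact sum_le_sum fun i _ ↦ mul_le_mul_of_nonneg_right
    (niceProb_mem_and_le_maxOverlap_le_mul_min hR hω hτ hτ0 i hk1) (ha i)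

end NiceSampling

section ESO

variable {ι : Type} [Fintype ι] {n : ℕ}

lemma niceExp_eq_expect (n τ : ℕ) (g : Finset (Fin n) → ℝ) :
    niceExp n τ g = 𝔼 S ∈ powersetCard τ univ, g S :=
  (expect_eq_sum_div_card _ _).symm

lemma sq_apply_le_Lip (A : Matrix ι (Fin n) ℝ) (j : ι) (i : Fin n) : A j i ^ 2 ≤ Lip A i :=
  le_ciSup (f := fun j ↦ A j i ^ 2) (Set.finite_range _).bddAbove j

lemma Lip_nonneg (A : Matrix ι (Fin n) ℝ) (i : Fin n) : 0 ≤ Lip A i :=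
  Real.iSup_nonneg fun _ ↦ sq_nonneg _

lemma sum_mul_restr (a h : Fin n → ℝ) (S : Finset (Fin n)) :
    ∑ i, a i * restr h S i = ∑ i ∈ S, a i * h i := by
  simp [restr]

/-- The support of row `j` of `A`. -/
def rowSupport (A : Matrix ι (Fin n) ℝ) (j : ι) : Finset (Fin n) :=
  {i | A j i ≠ 0}

lemma sq_mulVec_restr_le (A : Matrix ι (Fin n) ℝ) (h : Fin n → ℝ) (S : Finset (Fin n)) (j : ι) :
    A.mulVec (restr h S) j ^ 2 ≤
      #(S ∩ rowSupport A j) * ∑ i ∈ S, Lip A i * h i ^ 2 := by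
  have hsupp : A.mulVec (restr h S) j = ∑ i ∈ S ∩ rowSupport A j, A j i * h i := by
    rw [Matrix.mulVec, dotProduct, sum_mul_restr, rowSupport, inter_filter, inter_univ, sum_filter]
    refine sum_congr rfl fun i _ ↦ ?_
    split_ifs with hA <;> simp_all
  calc A.mulVec (restr h S) j ^ 2
      ≤ #(S ∩ rowSupport A j) * ∑ i ∈ S ∩ rowSupport A j, (A j i * h i) ^ 2 :=
        hsupp ▸ sq_sum_le_card_mul_sum_sq
    _ ≤ #(S ∩ rowSupport A j) * ∑ i ∈ S, (A j i * h i) ^ 2 := by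
        gcongr
        exact inter_subset_left
    _ ≤ #(S ∩ rowSupport A j) * ∑ i ∈ S, Lip A i * h i ^ 2 := by
        simp only [mul_pow]
        gcongr
        exact sq_apply_le_Lip A j _

lemma FObj_add_restr_le [Nonempty ι] {m : ℕ} (hm : 1 ≤ m) (A : Matrix ι (Fin n) ℝ)
    (x h : Fin n → ℝ) (S : Finset (Fin n)) :
    FObj m A (x + restr h S) ≤ FObj m A x + (∑ i ∈ S, gradF m A x i * h i +
      maxOverlap (rowSupport A) S * (∑ i ∈ S, Lip A i * h i ^ 2) / 2) := by
  have hnorm : 0 ≤ ∑ i ∈ S, Lip A i * h i ^ 2 :=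
    sum_nonneg fun i _ ↦ mul_nonneg (Lip_nonneg A i) (sq_nonneg _)
  have hrow (j : ι) : |A.mulVec (restr h S) j| ≤
      √(maxOverlap (rowSupport A) S * ∑ i ∈ S, Lip A i * h i ^ 2) := by
    refine Real.abs_le_sqrt ((sq_mulVec_restr_le A h S j).trans ?_)
    gcongr
    exact card_inter_le_maxOverlap _ S j
  have := FObj_add_le hm A x hrow
  rwa [Real.sq_sqrt (by positivity), sum_mul_restr] at this

theorem stmt1_general [Nonempty ι] {m : ℕ} (hm : 1 ≤ m) (A : Matrix ι (Fin n) ℝ) {τ ω : ℕ}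
    (hτ : τ ≤ n) (hA : (univ.sup fun j ↦ #{i | A j i ≠ 0}) ≤ ω) (hω : ω ≤ n) :
    ESO m A τ (esoConst (Fintype.card ι) n ω τ) := by
  intro x h
  have hlin := expect_powersetCard_sum (by simpa using hτ) fun i ↦ gradF m A x i * h i
  have hquad := expect_powersetCard_maxOverlap_mul_sum_le (R := rowSupport A)
    (fun j ↦ Finset.sup_le_iff.1 hA j (mem_univ j)) (by simpa using hω) (by simpa using hτ)
    fun i ↦ mul_nonneg (Lip_nonneg A i) (sq_nonneg (h i))
  have hne : (powersetCard τ (univ : Finset (Fin n))).Nonempty :=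
    powersetCard_nonempty.2 (by simpa using hτ)
  rw [Fintype.card_fin] at hlin hquad
  rw [niceExp_eq_expect]
  refine (expect_le_expect fun S _ ↦ FObj_add_restr_le hm A x h S).trans ?_
  rw [expect_add_distrib, expect_const hne, expect_add_distrib, hlin, ← expect_div]
  linarith

end ESO

/-- `(F, Ŝ) ∼ ESO(β, L)` for the `τ`-nice sampling, with the
explicit `β` built from `ω`, `p_l` and `c_l`. -/
theorem stmt1 {m n : ℕ} (hm : 1 ≤ m) (hn : 1 ≤ n) (A : Matrix (Fin m) (Fin n) ℝ)
    (hA : ∀ i : Fin n, ∃ j : Fin m, A j i ≠ 0)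
    (τ : ℕ) (hτ1 : 1 ≤ τ) (hτn : τ ≤ n)
    (ω : ℕ)
    (hω : ω = Finset.univ.sup fun j : Fin m =>
        (Finset.univ.filter fun i : Fin n => A j i ≠ 0).card)
    (p c : ℕ → ℝ)
    (hp : ∀ l, p l = ((ω.choose l : ℝ) * ((n - ω).choose (τ - l) : ℝ)) / (n.choose τ : ℝ))
    (hc : ∀ l, c l = max ((l : ℝ) / (ω : ℝ)) (((τ : ℝ) - (l : ℝ)) / ((n : ℝ) - (ω : ℝ))))
    (β : ℝ)
    (hβ : β = ∑ k ∈ Finset.Icc 1 (min ω τ),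
        min 1 (((m : ℝ) * (n : ℝ) / (τ : ℝ)) * ∑ l ∈ Finset.Icc k (min ω τ), c l * p l)) :
    ESO m A τ β := by
  have : Nonempty (Fin m) := ⟨⟨0, hm⟩⟩
  have hωn : ω ≤ n := hω ▸ Finset.sup_le fun j _ ↦ card_finset_fin_le _
  simpa [hβ, esoConst, funext hp, funext hc, memRatio, overlapProb] using
    stmt1_general hm A hτn hω.ge hωn

end
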